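/- Let α be an irrational number of finite Diophantine type γ(α) < ∞ and let R_α : 𝕊¹ → 𝕊¹ be the rotation by α. Then for every ε > 0 there exists a constant C = C(ε) ≥ 0 such that for every Borel probability measure μ on 𝕊¹ and every n ≥ 1: W(m, (1/n) Σ_{i=1}^{n} (R_α^i)_*μ) ≤ C · n^{−1/γ(α) + ε}. -/

import Mathlib

/-!
The Cesàro average tested against a `1`-Lipschitz function `g` is the `μ`-mean of the Birkhoff
averages of `g` along the rotation, so it suffices to bound, uniformly in the base point,
`D(n) = |Σ_{i=1}^n g(x + iα) - n ∫ g|`.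

If `|α - p/q| ≤ 1/q²` with `p/q` in lowest terms, an orbit segment of length `q` stays within `1/q`
of a permutation of the equidistributed points `x + j/q`, and this yields the Denjoy–Koksma-type
bound `D(q) ≤ 2` (`block_le`). Given `n`, Dirichlet's theorem supplies such a `q ≤ n` with
`‖qα‖ ≤ 1/n`; for any exponent `t` above the type `γ(α)` the Diophantine lower bound
`‖qα‖ ≥ c q^{-t}` then forces `q ≳ n^{1/t}` (`exists_good_rat`). Writing `n = b q + r` with `r < q`
gives `D(n) ≤ 2b + D(r)` with `b ≲ n^{1 - 1/t}` and `r ≤ n/2`, so iterating on the remainder sums a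
geometric series and `D(n) ≲ n^{1 - 1/t}` (`orbit_sum_le`). The series converges because `t > 1`,
which holds since `γ(α) ≥ 1` (`one_le_dioType`). Finally `t` is taken so close to `γ(α)` that
`1/t > 1/γ(α) - ε`.
-/

open MeasureTheory Filter Topology

/-- `‖x‖_ℤ`: the distance from `x` to the nearest integer. -/
noncomputable def distInt (x : ℝ) : ℝ := |x - round x|

/-- The set of exponents `γ ≥ 0` with `liminf_{k→∞} k^γ ‖kα‖_ℤ = 0`. -/
noncomputable def dioSet (α : ℝ) : Set ℝ :=
  {γ : ℝ | 0 ≤ γ ∧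
    Filter.atTop.liminf
      (fun k : ℕ => ENNReal.ofReal ((k : ℝ) ^ γ * distInt (k * α))) = 0}

/-- The Diophantine type `γ(α) = sup { γ ≥ 0 : liminf_k k^γ ‖kα‖_ℤ = 0 }`. -/
noncomputable def dioType (α : ℝ) : ℝ := sSup (dioSet α)

/-- The Wasserstein–Monge–Kantorovich (bounded-Lipschitz) distance between two Borel
measures on the circle `ℝ/ℤ`. -/
noncomputable def W (μ ν : Measure (AddCircle (1:ℝ))) : ℝ :=
  ⨆ g : {g : AddCircle (1:ℝ) → ℝ // LipschitzWith 1 g ∧ ∀ x, |g x| ≤ 1},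
    |(∫ x, g.1 x ∂μ) - ∫ x, g.1 x ∂ν|

/-- The Cesàro average `(1/n) Σ_{i=1}^n (S^i)_* μ`. -/
noncomputable def cesaroAvg (S : AddCircle (1:ℝ) → AddCircle (1:ℝ))
    (μ : Measure (AddCircle (1:ℝ))) (n : ℕ) : Measure (AddCircle (1:ℝ)) :=
  (n : ENNReal)⁻¹ • ∑ i ∈ Finset.range n, Measure.map (S^[i + 1]) μ


/-! ### Quadrature error of equidistributed points -/

theorem circle_norm_le_abs (t : ℝ) : ‖(t : AddCircle (1:ℝ))‖ ≤ |t| := by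
  have h : ‖(t : UnitAddCircle)‖ ≤ |t| := by
    rw [UnitAddCircle.norm_eq]
    simpa using round_le t 0
  exact h

theorem circle_isProb : IsProbabilityMeasure (volume : Measure (AddCircle (1:ℝ))) :=
  ⟨by simp [AddCircle.measure_univ]⟩

theorem abs_sub_le_of_lipschitz {g : AddCircle (1:ℝ) → ℝ} (hg : LipschitzWith 1 g)
    (x y : AddCircle (1:ℝ)) : |g x - g y| ≤ ‖x - y‖ := by
  have := hg.dist_le_mul x y
  rwa [Real.dist_eq, NNReal.coe_one, one_mul, dist_eq_norm] at this

theorem integrable_of_lipschitz {g : AddCircle (1:ℝ) → ℝ} (hg : LipschitzWith 1 g)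
    (μ : Measure (AddCircle (1:ℝ))) [IsFiniteMeasure μ] : Integrable g μ :=
  (BoundedContinuousFunction.mkOfCompact ⟨g, hg.continuous⟩).integrable μ

/-- The points `x + j/q` of the circle are `1/q`-dense. -/
theorem exists_zmod_near (q : ℕ) [NeZero q] (x y : AddCircle (1:ℝ)) :
    ∃ k : ZMod q, ‖(x + (ZMod.toAddCircle k : AddCircle (1:ℝ))) - y‖ ≤ 1 / q := by
  have hq : (0:ℝ) < q := by exact_mod_cast Nat.pos_of_ne_zero (NeZero.ne q)
  obtain ⟨t, ht⟩ := QuotientAddGroup.mk_surjective (y - x)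
  refine ⟨((⌊t * q⌋ : ℤ) : ZMod q), ?_⟩
  rw [ZMod.toAddCircle_intCast]
  have h : x + ((((⌊t * q⌋ : ℤ) : ℝ) / q : ℝ) : AddCircle (1:ℝ)) - y
      = (((⌊t * q⌋ : ℤ) : ℝ) / q - t : ℝ) := by
    rw [AddCircle.coe_sub]
    change _ = _ - (QuotientAddGroup.mk t : AddCircle (1:ℝ))
    rw [ht]; abel
  refine (congrArg norm h).trans_le ((circle_norm_le_abs _).trans ?_)
  have e : ((⌊t * q⌋ : ℤ) : ℝ) / q - t = (((⌊t * q⌋ : ℤ) : ℝ) - t * q) / q := by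
    field_simp
  rw [e, abs_div, abs_of_pos hq]
  gcongr
  rw [abs_le]
  constructor <;> linarith [Int.floor_le (t * q), Int.lt_floor_add_one (t * q)]

/-- The equidistributed quadrature rule with `q` nodes has total error at most `1` on
`1`-Lipschitz functions: the sum over nodes is `1/q`-periodic in the base point, hence
oscillates by at most `q · (1/q)`, and its mean is `q ∫ g` by invariance. -/
theorem sum_zmod_sub_integral_le {g : AddCircle (1:ℝ) → ℝ} (hg : LipschitzWith 1 g)
    (q : ℕ) [NeZero q] (x : AddCircle (1:ℝ)) :
    |∑ j : ZMod q, g (x + (ZMod.toAddCircle j : AddCircle (1:ℝ))) - q * ∫ y, g y| ≤ 1 := by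
  have := circle_isProb
  have hq : (0:ℝ) < q := by exact_mod_cast Nat.pos_of_ne_zero (NeZero.ne q)
  set h : AddCircle (1:ℝ) → ℝ :=
    fun x => ∑ j : ZMod q, g (x + (ZMod.toAddCircle j : AddCircle (1:ℝ))) with hh
  have hint (j : ZMod q) :
      Integrable (fun x => g (x + (ZMod.toAddCircle j : AddCircle (1:ℝ)))) :=
    (integrable_of_lipschitz hg volume).comp_add_right _
  have hI : ∫ y, h y = q * ∫ y, g y := by
    rw [hh, integral_finsetSum _ (fun j _ => hint j)]
    simp [integral_add_right_eq_self g]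
  have hhint : Integrable h := integrable_finsetSum _ (fun j _ => hint j)
  have hosc (y : AddCircle (1:ℝ)) : |h x - h y| ≤ 1 := by
    obtain ⟨k, hk⟩ := exists_zmod_near q x y
    have hper : h x = h (x + (ZMod.toAddCircle k : AddCircle (1:ℝ))) := by
      simp only [hh]
      rw [← Equiv.sum_comp (Equiv.addLeft k)]
      refine Finset.sum_congr rfl fun j _ => ?_
      congr 1
      rw [Equiv.coe_addLeft, map_add]
      exact (add_assoc _ _ _).symm
    rw [hper, hh]
    simp only
    rw [← Finset.sum_sub_distrib]
    refine (Finset.abs_sum_le_sum_abs _ _).trans ?_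
    have : ∀ j ∈ (Finset.univ : Finset (ZMod q)),
        |g (x + (ZMod.toAddCircle k : AddCircle (1:ℝ)) + (ZMod.toAddCircle j : AddCircle (1:ℝ)))
          - g (y + (ZMod.toAddCircle j : AddCircle (1:ℝ)))| ≤ 1 / (q:ℝ) := fun j _ => by
      refine (abs_sub_le_of_lipschitz hg _ _).trans ?_
      rwa [add_sub_add_right_eq_sub]
    refine (Finset.sum_le_card_nsmul _ _ _ this).trans ?_
    simp [ZMod.card]
  have : h x - q * ∫ y, g y = ∫ y, (h x - h y) := by
    rw [integral_sub (integrable_const _) hhint, hI]; simp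
  change |h x - q * ∫ y, g y| ≤ 1
  rw [this]
  simpa using norm_integral_le_of_norm_le_const (μ := (volume : Measure (AddCircle (1:ℝ))))
    (f := fun y => h x - h y) (C := 1) (Eventually.of_forall hosc)

/-! ### Orbit segments of length `q` -/

/-- Multiples of a fraction `p/q` in lowest terms run through all `q`-th division points. -/
theorem sum_range_eq_sum_zmod (r : ℚ) [NeZero r.den] (F : ZMod r.den → ℝ) :
    ∑ i ∈ Finset.range r.den, F ((((i + 1 : ℕ) : ℤ) * r.num : ℤ) : ZMod r.den) = ∑ j, F j := by
  have hu : IsUnit ((r.num : ℤ) : ZMod r.den) := by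
    rw [ZMod.coe_int_isUnit_iff_isCoprime]
    exact (Int.isCoprime_iff_nat_coprime.2 (by simpa using r.reduced)).symm
  obtain ⟨u, hu⟩ := hu
  refine Finset.sum_nbij' (fun i => ((((i + 1 : ℕ) : ℤ) * r.num : ℤ) : ZMod r.den))
    (fun z => (z * (↑u⁻¹ : ZMod r.den) - 1).val) ?_ ?_ ?_ ?_ ?_
  · simp
  · intro z _; simpa using ZMod.val_lt _
  · intro i hi
    have : ((((i + 1 : ℕ) : ℤ) * r.num : ℤ) : ZMod r.den) * (↑u⁻¹ : ZMod r.den) - 1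
        = (i : ZMod r.den) := by
      push_cast; rw [← hu, mul_assoc, Units.mul_inv]; ring
    rw [this, ZMod.val_natCast]
    exact Nat.mod_eq_of_lt (Finset.mem_range.1 hi)
  · intro z _
    push_cast
    rw [ZMod.natCast_zmod_val, ← hu, sub_add_cancel, mul_assoc, Units.inv_mul, mul_one]
  · intros; rfl

/-- Denjoy–Koksma-type estimate: if `|α - p/q| ≤ 1/q²` in lowest terms, an orbit segment of
length `q` shadows the `q` equidistributed nodes within `1/q` each. -/
theorem block_le {g : AddCircle (1:ℝ) → ℝ} (hg : LipschitzWith 1 g) (α : ℝ) (r : ℚ)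
    (hr : |α - r| ≤ 1 / ((r.den : ℝ) * r.den)) (x : AddCircle (1:ℝ)) :
    |∑ i ∈ Finset.range r.den, g (x + (i + 1) • (α : AddCircle (1:ℝ))) - r.den * ∫ y, g y|
      ≤ 2 := by
  have : NeZero r.den := ⟨r.den_nz⟩
  have hq : (0:ℝ) < r.den := by exact_mod_cast r.den_pos
  have h1 := sum_zmod_sub_integral_le hg r.den x
  rw [← sum_range_eq_sum_zmod r
    (fun j => g (x + (ZMod.toAddCircle j : AddCircle (1:ℝ))))] at h1
  have h2 : |∑ i ∈ Finset.range r.den, g (x + (i + 1) • (α : AddCircle (1:ℝ)))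
      - ∑ i ∈ Finset.range r.den, g (x + (ZMod.toAddCircle
        ((((i + 1 : ℕ) : ℤ) * r.num : ℤ) : ZMod r.den) : AddCircle (1:ℝ)))| ≤ 1 := by
    rw [← Finset.sum_sub_distrib]
    refine (Finset.abs_sum_le_sum_abs _ _).trans ?_
    have : ∀ i ∈ Finset.range r.den, |g (x + (i + 1) • (α : AddCircle (1:ℝ)))
        - g (x + (ZMod.toAddCircle
        ((((i + 1 : ℕ) : ℤ) * r.num : ℤ) : ZMod r.den) : AddCircle (1:ℝ)))|
        ≤ 1 / (r.den : ℝ) := fun i hi => by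
      refine (abs_sub_le_of_lipschitz hg _ _).trans ?_
      rw [add_sub_add_left_eq_sub, ZMod.toAddCircle_intCast]
      have e : (i + 1) • (α : AddCircle (1:ℝ))
          - (((((i + 1 : ℕ) : ℤ) * r.num : ℤ) / (r.den : ℝ) : ℝ) : AddCircle (1:ℝ))
          = (((i + 1 : ℕ) : ℝ) * (α - r) : ℝ) := by
        rw [← AddCircle.coe_nsmul, ← AddCircle.coe_sub]
        congr 1
        have hr' : (r : ℝ) = r.num / r.den := Rat.cast_def r
        rw [hr', nsmul_eq_mul]
        push_cast
        ring
      refine (congrArg norm e).trans_le ((circle_norm_le_abs _).trans ?_)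
      have hi' : ((i + 1 : ℕ) : ℝ) ≤ r.den := by
        exact_mod_cast Finset.mem_range.1 hi
      rw [abs_mul, abs_of_nonneg (by positivity)]
      calc ((i + 1 : ℕ) : ℝ) * |α - r| ≤ r.den * (1 / ((r.den : ℝ) * r.den)) := by gcongr
        _ = 1 / (r.den : ℝ) := by field_simp
    refine (Finset.sum_le_card_nsmul _ _ _ this).trans ?_
    simp
  rw [abs_le] at *
  constructor <;> linarith

theorem sum_orbit_add (g : AddCircle (1:ℝ) → ℝ) (a x : AddCircle (1:ℝ)) (m l : ℕ) :
    ∑ i ∈ Finset.range (m + l), g (x + (i + 1) • a)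
      = ∑ i ∈ Finset.range m, g (x + (i + 1) • a)
        + ∑ i ∈ Finset.range l, g (x + m • a + (i + 1) • a) := by
  rw [Finset.sum_range_add]
  congr 1
  refine Finset.sum_congr rfl fun i _ => ?_
  rw [add_assoc x, ← add_nsmul, add_assoc m]

theorem blocks_le {g : AddCircle (1:ℝ) → ℝ} {a : AddCircle (1:ℝ)} {q : ℕ} {I : ℝ}
    (h : ∀ x, |∑ i ∈ Finset.range q, g (x + (i + 1) • a) - q * I| ≤ 2) (b : ℕ)
    (x : AddCircle (1:ℝ)) :
    |∑ i ∈ Finset.range (b * q), g (x + (i + 1) • a) - (b * q : ℕ) * I| ≤ 2 * b := by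
  induction b with
  | zero => simp
  | succ b ih =>
    rw [Nat.succ_mul, sum_orbit_add]
    have h' := h (x + (b * q) • a)
    rw [abs_le] at *
    push_cast at *
    constructor <;> linarith

/-! ### Diophantine approximation -/

/-- An exponent above the Diophantine type gives a uniform Diophantine lower bound. -/
theorem exists_dio_lower {α : ℝ} (hα : Irrational α) (hfin : BddAbove (dioSet α)) {t : ℝ}
    (ht : dioType α < t) : ∃ c > (0:ℝ), ∀ k : ℕ, 1 ≤ k → c ≤ (k:ℝ) ^ t * distInt (k * α) := by
  have h0 : 0 ≤ dioType α := Real.sSup_nonneg fun x hx => hx.1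
  have hnot : t ∉ dioSet α := fun h => (le_csSup hfin h).not_gt ht
  have hne : Filter.atTop.liminf
      (fun k : ℕ => ENNReal.ofReal ((k : ℝ) ^ t * distInt (k * α))) ≠ 0 := fun h =>
    hnot ⟨h0.trans ht.le, h⟩
  obtain ⟨c, hc0, hc⟩ := exists_between (pos_iff_ne_zero.2 hne)
  have hev := eventually_lt_of_lt_liminf hc
  obtain ⟨N, hN⟩ := eventually_atTop.1 hev
  have hctop : c ≠ ⊤ := (lt_of_lt_of_le (hN N le_rfl) le_top).ne
  have hcpos : 0 < c.toReal := ENNReal.toReal_pos hc0.ne' hctop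
  have hpos : ∀ k : ℕ, 1 ≤ k → 0 < (k:ℝ) ^ t * distInt (k * α) := fun k hk => by
    have hk' : (0:ℝ) < k := by exact_mod_cast hk
    refine mul_pos (Real.rpow_pos_of_pos hk' _) (abs_pos.2 (sub_ne_zero.2 ?_))
    exact (hα.natCast_mul (by omega)).ne_int _
  -- the finitely many `k < M` only cost a further minimum of positive numbers
  have hfinite : ∀ M : ℕ, ∃ d > (0:ℝ), ∀ k : ℕ, 1 ≤ k → k < M →
      d ≤ (k:ℝ) ^ t * distInt (k * α) := by
    intro M
    induction M with
    | zero => exact ⟨1, one_pos, fun k _ h => by omega⟩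
    | succ M ih =>
      obtain ⟨d, hd, h⟩ := ih
      rcases Nat.eq_zero_or_pos M with rfl | hM
      · exact ⟨1, one_pos, fun k _ h => by omega⟩
      · refine ⟨min d ((M:ℝ) ^ t * distInt (M * α)), lt_min hd (hpos M hM), fun k hk hkM => ?_⟩
        rcases Nat.lt_succ_iff_lt_or_eq.1 hkM with h' | rfl
        · exact (min_le_left _ _).trans (h k hk h')
        · exact min_le_right _ _
  obtain ⟨d, hd, h⟩ := hfinite N
  refine ⟨min c.toReal d, lt_min hcpos hd, fun k hk => ?_⟩
  rcases lt_or_ge k N with h' | h'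
  · exact (min_le_right _ _).trans (h k hk h')
  · refine (min_le_left _ _).trans ?_
    exact ENNReal.toReal_le_of_le_ofReal (hpos k hk).le (hN k h').le

/-- Dirichlet's theorem combined with a Diophantine lower bound: the denominators of good
approximations cannot be small. -/
theorem exists_good_rat {α t c : ℝ}
    (hc : ∀ k : ℕ, 1 ≤ k → c ≤ (k:ℝ) ^ t * distInt (k * α)) {n : ℕ} (hn : 1 ≤ n) :
    ∃ r : ℚ, |α - r| ≤ 1 / ((r.den : ℝ) * r.den) ∧ r.den ≤ n ∧ c * n ≤ (r.den : ℝ) ^ t := by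
  obtain ⟨r, hr, hrn⟩ := Real.exists_rat_abs_sub_le_and_den_le α hn
  have hq : (0:ℝ) < r.den := by exact_mod_cast r.den_pos
  have hrn' : (r.den : ℝ) ≤ n := by exact_mod_cast hrn
  refine ⟨r, hr.trans ?_, hrn, ?_⟩
  · gcongr; linarith
  · have hn0 : (0:ℝ) < n := by exact_mod_cast hn
    have hd : distInt (r.den * α) ≤ 1 / n := by
      refine (round_le _ r.num).trans ?_
      have e : (r.den : ℝ) * α - r.num = r.den * (α - r) := by
        rw [mul_sub, Rat.cast_def r]; field_simp
      rw [e, abs_mul, abs_of_pos hq]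
      calc (r.den : ℝ) * |α - r| ≤ r.den * (1 / ((n + 1) * r.den)) := by gcongr
        _ = 1 / (n + 1) := by field_simp
        _ ≤ 1 / n := by gcongr; linarith
    have h1 := hc r.den r.den_pos
    have h2 : c ≤ (r.den : ℝ) ^ t * (1 / n) :=
      h1.trans (mul_le_mul_of_nonneg_left hd (by positivity))
    calc c * n ≤ (r.den : ℝ) ^ t * (1 / n) * n := by gcongr
      _ = _ := by field_simp

/-- For irrational `α` the Diophantine type is at least `1`, by Dirichlet's theorem. -/
theorem one_le_dioType {α : ℝ} (hα : Irrational α) (hfin : BddAbove (dioSet α)) :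
    1 ≤ dioType α := by
  have h0 : 0 ≤ dioType α := Real.sSup_nonneg fun x hx => hx.1
  by_contra! hlt
  obtain ⟨t, h1, h2⟩ := exists_between hlt
  obtain ⟨c, hc0, hc⟩ := exists_dio_lower hα hfin h1
  have htend : Tendsto (fun n : ℕ => (n:ℝ) ^ (1 - t)) atTop atTop :=
    (tendsto_rpow_atTop (by linarith)).comp tendsto_natCast_atTop_atTop
  obtain ⟨n, hn, hn1⟩ := ((htend.eventually_gt_atTop (1 / c)).and (eventually_ge_atTop 1)).exists
  obtain ⟨r, -, hrn, hr⟩ := exists_good_rat hc hn1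
  have hn0 : (0:ℝ) < n := by exact_mod_cast hn1
  have h3 : c * n ≤ (n:ℝ) ^ t :=
    hr.trans (Real.rpow_le_rpow (by positivity) (by exact_mod_cast hrn) (by linarith))
  rw [Real.rpow_sub hn0, Real.rpow_one, div_lt_div_iff₀ hc0 (by positivity)] at hn
  linarith

/-! ### Discrepancy of orbits -/

/-- Discrepancy bound for orbit sums. Splitting `n = b q + r` with `q ≳ n^(1/t)` a good
denominator costs `2 b ≲ n^(1 - 1/t)`, and since `r ≤ n / 2` the costs of the successive
remainders decay geometrically. -/
theorem orbit_sum_le {α t c : ℝ} (ht : 1 < t) (hc0 : 0 < c)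
    (hc : ∀ k : ℕ, 1 ≤ k → c ≤ (k:ℝ) ^ t * distInt (k * α)) :
    ∃ K ≥ (0:ℝ), ∀ g : AddCircle (1:ℝ) → ℝ, LipschitzWith 1 g → ∀ n : ℕ,
      ∀ x : AddCircle (1:ℝ),
      |∑ i ∈ Finset.range n, g (x + (i + 1) • (α : AddCircle (1:ℝ))) - n * ∫ y, g y|
        ≤ K * (n:ℝ) ^ (1 - 1 / t) := by
  have ht0 : 0 < t := by linarith
  set s : ℝ := 1 - 1 / t with hs
  have hs0 : 0 < s := by
    have : 1 / t < 1 := by rw [div_lt_one ht0]; exact ht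
    linarith
  set A : ℝ := (c ^ (1 / t))⁻¹ with hA
  have hA0 : 0 < A := by positivity
  set θ : ℝ := (1 / 2 : ℝ) ^ s with hθ
  have hθ1 : θ < 1 := Real.rpow_lt_one (by norm_num) (by norm_num) hs0
  -- `K` solves `2 A + K θ = K`, closing the recursion
  set K : ℝ := 2 * A / (1 - θ) with hK
  have hKe : 2 * A + K * θ = K := by
    have : 1 - θ ≠ 0 := by linarith
    rw [hK]; field_simp; ring
  have hK0 : 0 ≤ K := div_nonneg (by positivity) (by linarith)
  refine ⟨K, hK0, fun g hg n => ?_⟩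
  induction n using Nat.strong_induction_on with
  | _ n ih =>
    intro x
    rcases Nat.eq_zero_or_pos n with rfl | hn
    · simp [Real.zero_rpow hs0.ne']
    obtain ⟨r, hr, hrn, hrt⟩ := exists_good_rat hc hn
    have hq : (0:ℝ) < r.den := by exact_mod_cast r.den_pos
    have hn0 : (0:ℝ) < n := by exact_mod_cast hn
    obtain ⟨b, hb⟩ : ∃ b, b = n / r.den := ⟨_, rfl⟩
    obtain ⟨m, hm⟩ : ∃ m, m = n % r.den := ⟨_, rfl⟩
    have hsplit : n = b * r.den + m := by
      rw [hb, hm]; exact (Nat.div_add_mod' n r.den).symm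
    have hmq : m < r.den := hm ▸ Nat.mod_lt _ r.den_pos
    have hb1 : 1 ≤ b := hb ▸ (Nat.one_le_div_iff r.den_pos).2 hrn
    have hbq : r.den ≤ b * r.den := Nat.le_mul_of_pos_left _ hb1
    have hblock := blocks_le (fun x => block_le hg α r hr x) b x
    have hrest := ih m (by omega) (x + (b * r.den) • (α : AddCircle (1:ℝ)))
    have hm2 : (m:ℝ) ≤ 1 / 2 * n := by
      have : 2 * m ≤ n := by omega
      have : (2 * m : ℝ) ≤ n := by exact_mod_cast this
      linarith
    have hms : (m:ℝ) ^ s ≤ θ * (n:ℝ) ^ s := by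
      rw [hθ, ← Real.mul_rpow (by norm_num) hn0.le]
      exact Real.rpow_le_rpow (by positivity) hm2 hs0.le
    have hqn : c ^ (1 / t) * (n:ℝ) ^ (1 / t) ≤ r.den := by
      rw [← Real.mul_rpow hc0.le hn0.le]
      calc (c * n) ^ (1 / t) ≤ ((r.den : ℝ) ^ t) ^ (1 / t) :=
            Real.rpow_le_rpow (by positivity) hrt (by positivity)
        _ = r.den := by rw [one_div, Real.rpow_rpow_inv hq.le ht0.ne']
    have hbs : (b:ℝ) ≤ A * (n:ℝ) ^ s := by
      have h1 : (b:ℝ) * r.den ≤ n := by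
        have : b * r.den ≤ n := by omega
        exact_mod_cast this
      have h2 : (b:ℝ) * (c ^ (1 / t) * (n:ℝ) ^ (1 / t)) ≤ n :=
        (mul_le_mul_of_nonneg_left hqn (by positivity)).trans h1
      rw [hs, Real.rpow_sub hn0, Real.rpow_one, hA, inv_mul_eq_div, div_div,
        le_div_iff₀ (by positivity)]
      linarith
    have hfin : 2 * (b:ℝ) + K * (m:ℝ) ^ s ≤ K * (n:ℝ) ^ s := by
      have h1 := mul_le_mul_of_nonneg_left hms hK0
      calc 2 * (b:ℝ) + K * (m:ℝ) ^ s ≤ 2 * (A * (n:ℝ) ^ s) + K * (θ * (n:ℝ) ^ s) := by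
            linarith
        _ = (2 * A + K * θ) * (n:ℝ) ^ s := by ring
        _ = _ := by rw [hKe]
    refine le_trans ?_ hfin
    have hcast : (n:ℝ) = (b * r.den : ℕ) + m := by exact_mod_cast hsplit
    rw [hcast]
    have hsum := sum_orbit_add g (α : AddCircle (1:ℝ)) x (b * r.den) m
    rw [← hsplit] at hsum
    rw [hsum]
    rw [abs_le] at *
    constructor <;> linarith

/-! ### Cesàro averages -/

theorem integral_cesaroAvg {g : AddCircle (1:ℝ) → ℝ} (hg : LipschitzWith 1 g)
    (a : AddCircle (1:ℝ)) (μ : Measure (AddCircle (1:ℝ))) [IsProbabilityMeasure μ] (n : ℕ) :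
    ∫ x, g x ∂(cesaroAvg (fun x => x + a) μ n)
      = (n:ℝ)⁻¹ * ∫ x, ∑ i ∈ Finset.range n, g (x + (i + 1) • a) ∂μ := by
  have hmeas (i : ℕ) : Measurable (fun x : AddCircle (1:ℝ) => x + (i + 1) • a) :=
    measurable_add_const _
  have hsm : StronglyMeasurable g := hg.continuous.stronglyMeasurable
  have hint (i : ℕ) : Integrable (fun x => g (x + (i + 1) • a)) μ :=
    (hg.comp (g := fun x => x + (i + 1) • a) (Kg := 1)
      (LipschitzWith.of_dist_le_mul fun x y => by simp) |>.weaken (by simp) |>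
      fun h => integrable_of_lipschitz h μ)
  unfold cesaroAvg
  simp only [add_right_iterate]
  rw [integral_smul_measure, integral_finsetSum_measure, integral_finsetSum _ fun i _ => hint i]
  · simp only [ENNReal.toReal_inv, ENNReal.toReal_natCast, smul_eq_mul]
    congr 1
    refine Finset.sum_congr rfl fun i _ => ?_
    rw [integral_map (hmeas i).aemeasurable hsm.aestronglyMeasurable]
  · intro i _
    have := Measure.isProbabilityMeasure_map (μ := μ) (hmeas i).aemeasurable
    exact integrable_of_lipschitz hg _

/-- If `α` is irrational of finite Diophantine type `γ(α)`, then for every `ε > 0`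
there is `C = C(ε) ≥ 0` such that for every Borel probability measure `μ` on the circle
and every `n ≥ 1`, `W(m, (1/n) Σ_{i=1}^n (R_α^i)_* μ) ≤ C · n^{−1/γ(α) + ε}`. -/
theorem cesaro_quantitative_convergence_diophantine
    (α : ℝ) (hα : Irrational α) (hfin : BddAbove (dioSet α)) :
    ∀ ε > (0:ℝ), ∃ C ≥ (0:ℝ), ∀ μ : Measure (AddCircle (1:ℝ)),
      IsProbabilityMeasure μ → ∀ n : ℕ, 1 ≤ n →
      W volume (cesaroAvg (fun x => x + (α : AddCircle (1:ℝ))) μ n)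
        ≤ C * (n : ℝ) ^ (-(1 / dioType α) + ε) := by
  intro ε hε
  have hγ := one_le_dioType hα hfin
  -- an exponent `t` slightly above the type loses at most `ε`, by continuity of `1 / t`
  obtain ⟨t, hγt, htε⟩ : ∃ t, dioType α < t ∧ 1 / dioType α - ε < 1 / t := by
    have hcont : Tendsto (fun t : ℝ => 1 / t) (𝓝[>] dioType α) (𝓝 (1 / dioType α)) :=
      ((continuousAt_const.div continuousAt_id (zero_lt_one.trans_le hγ).ne').tendsto).mono_left
        nhdsWithin_le_nhds
    obtain ⟨t, h1, h2⟩ := ((hcont.eventually (lt_mem_nhds (sub_lt_self _ hε))).and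
      self_mem_nhdsWithin).exists
    exact ⟨t, h2, h1⟩
  obtain ⟨c, hc0, hc⟩ := exists_dio_lower hα hfin hγt
  obtain ⟨K, hK0, hK⟩ := orbit_sum_le (by linarith) hc0 hc
  refine ⟨K, hK0, fun μ hμ n hn => ?_⟩
  have hn0 : (0:ℝ) < n := by exact_mod_cast hn
  refine Real.iSup_le (fun ⟨g, hg, _⟩ => ?_) (by positivity)
  rw [integral_cesaroAvg hg]
  set S : AddCircle (1:ℝ) → ℝ :=
    fun x => ∑ i ∈ Finset.range n, g (x + (i + 1) • (α : AddCircle (1:ℝ))) with hS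
  have hSc : Continuous S := continuous_finsetSum _ fun i _ =>
    hg.continuous.comp (continuous_add_const _)
  have hSint : Integrable S μ :=
    (BoundedContinuousFunction.mkOfCompact ⟨S, hSc⟩).integrable μ
  have hdiff : |∫ x, (S x - n * ∫ y, g y) ∂μ| ≤ K * (n:ℝ) ^ (1 - 1 / t) := by
    simpa using norm_integral_le_of_norm_le_const (μ := μ)
      (f := fun x => S x - n * ∫ y, g y) (Eventually.of_forall (hK g hg n))
  have e : (∫ x, g x) - (n:ℝ)⁻¹ * ∫ x, S x ∂μ = -((n:ℝ)⁻¹ * ∫ x, (S x - n * ∫ y, g y) ∂μ) := by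
    rw [integral_sub hSint (integrable_const _)]
    simp
    field_simp
    ring
  rw [e, abs_neg, abs_mul, abs_of_pos (inv_pos.2 hn0)]
  calc (n:ℝ)⁻¹ * |∫ x, (S x - n * ∫ y, g y) ∂μ| ≤ (n:ℝ)⁻¹ * (K * (n:ℝ) ^ (1 - 1 / t)) := by
        gcongr
    _ = K * (n:ℝ) ^ (-(1 / t)) := by
        rw [sub_eq_add_neg, Real.rpow_add hn0, Real.rpow_one]; field_simp
    _ ≤ K * (n:ℝ) ^ (-(1 / dioType α) + ε) := by
        gcongr
        · exact_mod_cast hn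
        · linarith
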